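/- arXiv:2007.01722 — 6 statements merged into one kernel-verified Lean document; each statement's English description precedes it below -/
import Mathlib

section
/- In a first price auction with no-allocation tie-breaking, fix a bidder i, a product distribution F_{-i} over the opponents' values, and arbitrary opponents' bidding strategies b_{-i}(·). Let b_i(·): T_i → [0,H] be any bidding strategy such that for every v_i ∈ T_i the supremum sup_{v ∈ T_i} U_i(v_i, b_i(v), b_{-i}(·)) is attained at some v* ∈ T_i. Then there exists a monotone bidding strategy b_i'(·): T_i → [0,H] such that for every v_i ∈ T_i, U_i(v_i, b_i'(v_i), b_{-i}(·)) ≥ U_i(v_i, b_i(v_i), b_{-i}(·)). -/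
/-!
The interim utility of bidding `x` with value `v` factors as `(v - x) * Q x`, where `Q x ≥ 0` is the
integral of the indicator of winning at bid `x`. Send every value whose best re-used bid earns at most
`0` to the bid `0`, which earns at least `0`, and every other value to a best re-used bid. The latter
values form an upper set, since `(v - x) * Q x` is nondecreasing in `v`. Among them a best bid satisfies `x < v` and `0 < Q x`,
and the two revealed-preference inequalities force the selection to be monotone.

The strategies need not be measurable, so `Q` may take the junk value `0` and fail to be monotone;
the argument uses only `Q ≥ 0`.
-/

open MeasureTheory Set
open scoped Classical ENNReal

noncomputable section

/-- Ex post utility of bidder `i` in a first price auction with no-allocation tie-breaking: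
she gets `vi - bi` if her bid `bi` strictly exceeds every opponent's bid, and `0` otherwise. -/
def fpaPost {n : ℕ} (i : Fin n) (vi bi : ℝ) (bids : Fin n → ℝ) : ℝ :=
  if ∀ j, j ≠ i → bids j < bi then vi - bi else 0

/-- Interim utility of bidder `i` with value `vi` bidding `bi`, when the opponents draw their
values from the product distribution `Measure.pi F` and bid according to strategies `b`. -/
def interimFPA {n : ℕ} (F : Fin n → Measure ℝ) (i : Fin n) (vi bi : ℝ)
    (b : Fin n → ℝ → ℝ) : ℝ :=
  ∫ v, fpaPost i vi bi (fun j => b j (v j)) ∂(Measure.pi F)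

/-- Interim utility is the margin `v - x` times a nonnegative weight depending only on the bid. -/
lemma interimFPA_factor {n : ℕ} (F : Fin n → Measure ℝ) (i : Fin n) (b : Fin n → ℝ → ℝ) :
    ∃ Q : ℝ → ℝ, (∀ x, 0 ≤ Q x) ∧ ∀ v x, interimFPA F i v x b = (v - x) * Q x := by
  refine ⟨fun x => ∫ v, (if ∀ j, j ≠ i → b j (v j) < x then (1 : ℝ) else 0) ∂(Measure.pi F),
    fun x => integral_nonneg fun v => ?_, fun v x => ?_⟩
  · dsimp only
    split_ifs <;> simp
  · rw [← integral_const_mul]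
    simp only [interimFPA, fpaPost, mul_ite, mul_one, mul_zero]

/-- Revealed preference: if `x` is at least as good as `x'` at value `v`, and `x'` at least as good
as `x` at a smaller value `v'`, with positive utility in both cases, then `x' ≤ x`. -/
lemma le_of_revealed_preference {v v' x x' q q' : ℝ} (hv : v' < v) (hq : 0 ≤ q) (hq' : 0 ≤ q')
    (h : (v - x') * q' ≤ (v - x) * q) (h' : (v' - x) * q ≤ (v' - x') * q')
    (hpos : 0 < (v - x) * q) (hpos' : 0 < (v' - x') * q') : x' ≤ x := by
  by_contra! hx
  have hq0 : 0 < q := hq.lt_of_ne fun h0 => by simp [← h0] at hpos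
  have hm : 0 < v' - x' := pos_of_mul_pos_left hpos' hq'
  have hqq : q' ≤ q := by nlinarith
  nlinarith [mul_le_mul_of_nonneg_left hqq hm.le, mul_pos (sub_pos.2 hx) hq0]

/-- In a first price auction with no-allocation tie-breaking, any bidding strategy whose
interim utility suprema over re-used bids are attained is weakly dominated by a monotone
bidding strategy. -/
theorem fpa_monotone_dominates
    (n : ℕ) (H : ℝ) (hH : 0 < H)
    (T : Fin n → Set ℝ) (hT : ∀ j, T j ⊆ Icc 0 H)
    (F : Fin n → Measure ℝ) (hFprob : ∀ j, IsProbabilityMeasure (F j))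
    (hFsupp : ∀ j, F j (T j) = 1)
    (i : Fin n)
    (b : Fin n → ℝ → ℝ) (hb : ∀ j, ∀ v ∈ T j, b j v ∈ Icc 0 H)
    (hatt : ∀ vi ∈ T i, ∃ vstar ∈ T i, ∀ v ∈ T i,
      interimFPA F i vi (b i v) b ≤ interimFPA F i vi (b i vstar) b) :
    ∃ b' : ℝ → ℝ, (∀ v ∈ T i, b' v ∈ Icc 0 H) ∧ MonotoneOn b' (T i) ∧
      ∀ vi ∈ T i, interimFPA F i vi (b i vi) b ≤ interimFPA F i vi (b' vi) b := by
  obtain ⟨Q, hQ, hU⟩ := interimFPA_factor F i b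
  simp only [hU] at hatt ⊢
  choose! s hsT hs using hatt
  refine ⟨fun v => if 0 < (v - b i (s v)) * Q (b i (s v)) then b i (s v) else 0, ?_, ?_, ?_⟩
  · intro v hv
    dsimp only
    split_ifs
    · exact hb i _ (hsT v hv)
    · exact ⟨le_rfl, hH.le⟩
  · intro v' hv' v hv hle
    rcases hle.eq_or_lt with rfl | hlt
    · exact le_rfl
    dsimp only
    split_ifs with h1 h2 h2
    · exact le_of_revealed_preference hlt (hQ _) (hQ _) (hs v hv _ (hsT v' hv'))
        (hs v' hv' _ (hsT v hv)) h2 h1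
    · -- Re-using the bid of `v'` at the larger value `v` would earn a positive utility.
      refine absurd (h1.trans_le (le_trans ?_ (hs v hv _ (hsT v' hv')))) h2
      exact mul_le_mul_of_nonneg_right (by linarith) (hQ _)
    · exact (hb i _ (hsT v hv)).1
    · exact le_rfl
  · intro v hv
    dsimp only
    split_ifs with h
    · exact hs v hv v hv
    · refine ((hs v hv v hv).trans (not_lt.1 h)).trans ?_
      exact mul_nonneg (by simpa using (hT i hv).1) (hQ 0)

end
end

section
/- In an all pay auction with no-allocation tie-breaking, fix a bidder i, a product distribution F_{-i} over the opponents' values, and arbitrary opponents' bidding strategies b_{-i}(·). Let b_i(·): T_i → [0,H] be any bidding strategy such that for every v_i ∈ T_i the supremum sup_{v ∈ T_i} U_i(v_i, b_i(v), b_{-i}(·)) is attained at some v* ∈ T_i. Then there exists a monotone bidding strategy b_i'(·): T_i → [0,H] such that for every v_i ∈ T_i, U_i(v_i, b_i'(v_i), b_{-i}(·)) ≥ U_i(v_i, b_i(v_i), b_{-i}(·)). -/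
/-!
A bid `x` whose winning event is null-measurable has interim utility `v * p x - x`, where the
winning probability `p` is monotone in `x`. Utilities of this form have increasing differences in
`(v, p)`, so a maximiser over the re-used bids `b i '' T i` can only grow with `v`: a larger value
selects a weakly larger winning probability, and a lower bid with the same winning probability
would have been preferred already by the smaller value.

No measurability of the opponents' strategies is assumed, so a bid may also have a winning event
that is not null-measurable, and then its interim utility is the junk value `0` of the Bochner
integral (or `-x` at value `0`). In every case such a bid yields at most `0`, while the bid `0`
yields at least `0`. Hence the monotone strategy bids `0` at values whose best re-used bid
gives nonpositive utility, and a maximising re-used bid at the others; the latter values form an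
upper set, since the utility of a fixed bid with null-measurable winning event increases with the
value.
-/

open MeasureTheory Set
open scoped Classical ENNReal

noncomputable section

/-- Ex post utility of bidder `i` in an all pay auction with no-allocation tie-breaking:
she gets the item (worth `vi`) if her bid `bi` strictly exceeds every opponent's bid,
and in any case pays her bid `bi`. -/
def allPayPost {n : ℕ} (i : Fin n) (vi bi : ℝ) (bids : Fin n → ℝ) : ℝ :=
  (if ∀ j, j ≠ i → bids j < bi then vi else 0) - bi

/-- Interim utility of bidder `i` with value `vi` bidding `bi`, when the opponents draw their
values from the product distribution `Measure.pi F` and bid according to strategies `b`. -/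
def interimAP {n : ℕ} (F : Fin n → Measure ℝ) (i : Fin n) (vi bi : ℝ)
    (b : Fin n → ℝ → ℝ) : ℝ :=
  ∫ v, allPayPost i vi bi (fun j => b j (v j)) ∂(Measure.pi F)

/-- The event, in the space of value profiles, that the bid `x` of bidder `i` wins. -/
def winSet {n : ℕ} (i : Fin n) (b : Fin n → ℝ → ℝ) (x : ℝ) : Set (Fin n → ℝ) :=
  {v | ∀ j, j ≠ i → b j (v j) < x}

lemma winSet_mono {n : ℕ} (i : Fin n) (b : Fin n → ℝ → ℝ) : Monotone (winSet i b) :=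
  fun _ _ hxy _ hv j hj => (hv j hj).trans_le hxy

lemma interimAP_eq {n : ℕ} (F : Fin n → Measure ℝ) [∀ j, IsProbabilityMeasure (F j)]
    (i : Fin n) (b : Fin n → ℝ → ℝ) (v x : ℝ)
    (hx : NullMeasurableSet (winSet i b x) (Measure.pi F)) :
    interimAP F i v x b = v * (Measure.pi F).real (winSet i b x) - x := by
  have hfun : (fun w : Fin n → ℝ => allPayPost i v x (fun j => b j (w j)))
      = fun w => (winSet i b x).indicator (fun _ => v) w - x := by
    funext w
    simp only [allPayPost, Set.indicator, winSet, Set.mem_ofPred_eq]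
    -- The two sides differ only in their decidability instances.
    congr
  have hint : Integrable ((winSet i b x).indicator fun _ => v) (Measure.pi F) :=
    (integrable_const v).indicator₀ hx
  rw [interimAP, hfun, integral_sub hint (integrable_const x), integral_indicator₀ hx]
  simp [mul_comm]

/-- Only a bid with null-measurable winning event can have positive interim utility: otherwise
the integrand is either the constant `-x` (at value `0`) or not integrable. -/
lemma nullMeasurableSet_winSet_of_pos {n : ℕ} (F : Fin n → Measure ℝ)
    [∀ j, IsProbabilityMeasure (F j)] (i : Fin n) (b : Fin n → ℝ → ℝ) {v x : ℝ} (hx : 0 ≤ x)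
    (hpos : 0 < interimAP F i v x b) :
    NullMeasurableSet (winSet i b x) (Measure.pi F) := by
  have hv : v ≠ 0 := by
    rintro rfl
    simp only [interimAP, allPayPost, ite_self, zero_sub, integral_const, probReal_univ,
      one_smul] at hpos
    linarith
  have hint : Integrable (fun w : Fin n → ℝ => allPayPost i v x (fun j => b j (w j)))
      (Measure.pi F) := by
    by_contra h
    rw [interimAP, integral_undef h] at hpos
    exact hpos.false
  have hset : winSet i b x
      = (fun w : Fin n → ℝ => allPayPost i v x (fun j => b j (w j))) ⁻¹' {-x}ᶜ := by
    ext w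
    by_cases h : ∀ j, j ≠ i → b j (w j) < x
    · simp only [winSet, allPayPost, mem_ofPred_eq, mem_preimage, mem_compl_iff,
        mem_singleton_iff, if_pos h]
      exact ⟨fun _ he => hv (by linarith), fun _ => h⟩
    · simp only [winSet, allPayPost, mem_ofPred_eq, mem_preimage, mem_compl_iff,
        mem_singleton_iff, if_neg h]
      exact ⟨fun h' => absurd h' h, fun h' => absurd (by ring) h'⟩
  rw [hset]
  exact hint.aestronglyMeasurable.aemeasurable.nullMeasurable
    (measurableSet_singleton (-x)).compl

lemma interimAP_zero_nonneg {n : ℕ} (F : Fin n → Measure ℝ) (i : Fin n) (b : Fin n → ℝ → ℝ)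
    {v : ℝ} (hv : 0 ≤ v) : 0 ≤ interimAP F i v 0 b := by
  refine integral_nonneg fun w => ?_
  simp only [allPayPost, sub_zero, Pi.zero_apply]
  split_ifs
  · exact hv
  · exact le_rfl

/-- Revealed preference: if `x` beats `x'` at value `v`, and `x'` beats `x` at a larger value `v'`,
then `x ≤ x'`. The two preferences add up to `p ≤ p'`, so a bid `x' < x` would win with the same
probability as `x` and be strictly better than `x` at `v`. -/
lemma le_of_revealed_pref {v v' x x' p p' : ℝ} (hv : v < v')
    (hp : x' ≤ x → p' ≤ p) (h : v * p' - x' ≤ v * p - x) (h' : v' * p - x ≤ v' * p' - x') :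
    x ≤ x' := by
  by_contra! hlt
  have hpp := hp hlt.le
  have hpe : p' = p := by
    refine le_antisymm hpp (le_of_mul_le_mul_left ?_ (sub_pos.mpr hv))
    linarith
  rw [hpe] at h
  linarith

/-- In an all pay auction with no-allocation tie-breaking, any bidding strategy whose
interim utility suprema over re-used bids are attained is weakly dominated by a monotone
bidding strategy. -/
theorem allPay_monotone_dominates
    (n : ℕ) (H : ℝ) (hH : 0 < H)
    (T : Fin n → Set ℝ) (hT : ∀ j, T j ⊆ Icc 0 H)
    (F : Fin n → Measure ℝ) (hFprob : ∀ j, IsProbabilityMeasure (F j))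
    (hFsupp : ∀ j, F j (T j) = 1)
    (i : Fin n)
    (b : Fin n → ℝ → ℝ) (hb : ∀ j, ∀ v ∈ T j, b j v ∈ Icc 0 H)
    (hatt : ∀ vi ∈ T i, ∃ vstar ∈ T i, ∀ v ∈ T i,
      interimAP F i vi (b i v) b ≤ interimAP F i vi (b i vstar) b) :
    ∃ b' : ℝ → ℝ, (∀ v ∈ T i, b' v ∈ Icc 0 H) ∧ MonotoneOn b' (T i) ∧
      ∀ vi ∈ T i, interimAP F i vi (b i vi) b ≤ interimAP F i vi (b' vi) b := by
  choose! s hsT hs using hatt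
  have hnn : ∀ v ∈ T i, 0 ≤ b i v := fun v hv => (hb i v hv).1
  refine ⟨fun v => if 0 < interimAP F i v (b i (s v)) b then b i (s v) else 0, ?_, ?_, ?_⟩
  · intro v hv
    dsimp only
    split_ifs
    · exact hb i _ (hsT v hv)
    · exact ⟨le_rfl, hH.le⟩
  · intro v hv v' hv' hle
    rcases hle.eq_or_lt with rfl | hlt
    · exact le_rfl
    dsimp only
    by_cases hpos : 0 < interimAP F i v (b i (s v)) b
    · have hx := nullMeasurableSet_winSet_of_pos F i b (hnn _ (hsT v hv)) hpos
      have hopt' := hs v' hv' (s v) (hsT v hv)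
      -- The bid used at `v` stays profitable at the larger value `v'`.
      have hpos' : 0 < interimAP F i v' (b i (s v')) b := by
        refine lt_of_lt_of_le ?_ hopt'
        rw [interimAP_eq F i b _ _ hx] at hpos ⊢
        have := mul_le_mul_of_nonneg_right hle
          (measureReal_nonneg (μ := Measure.pi F) (s := winSet i b (b i (s v))))
        linarith
      have hx' := nullMeasurableSet_winSet_of_pos F i b (hnn _ (hsT v' hv')) hpos'
      have hopt := hs v hv (s v') (hsT v' hv')
      rw [interimAP_eq F i b _ _ hx, interimAP_eq F i b _ _ hx'] at hopt hopt'
      rw [if_pos hpos, if_pos hpos']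
      exact le_of_revealed_pref hlt
        (fun h => measureReal_mono (winSet_mono i b h)) hopt hopt'
    · rw [if_neg hpos]
      split_ifs
      · exact hnn _ (hsT v' hv')
      · exact le_rfl
  · intro v hv
    have hopt := hs v hv v hv
    dsimp only
    split_ifs with hpos
    · exact hopt
    · exact hopt.trans ((not_lt.mp hpos).trans (interimAP_zero_nonneg F i b (hT i hv).1))

end
end

section
/- There is a universal constant C > 0 such that for every n ≥ 2 and H > 0, in the n-bidder first price auction with no-allocation tie-breaking and type spaces T_i ⊆ [0,H], for each bidder i the class 𝓗_i = { v_{-i} ↦ u_i^post(v_i, b_i(v_i), b_{-i}(v_{-i})) : v_i ∈ T_i, b(·) a profile of monotone bidding strategies } of real-valued functions on ∏_{j≠i} T_j has pseudo-dimension Pdim(𝓗_i) ≤ C·n·log n. -/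
/-!
Fix the points `pts l`, witnesses `w`, and a function `v ↦ u_i(v_i, β, b_{-i}(v_{-i}))` of the class.
By monotonicity, for each `j ≠ i` the set of indices `l` with `b_j (pts l j) < β` is a lower set for
the total preorder on indices induced by `l ↦ pts l j`, so its cardinality determines it
(`lowerFor_eq_of_card_eq`). Bidder `i` wins at `pts l` iff `l` lies in all of these sets. On the
points that `i` wins the function is the constant `v_i - β`, so its sign pattern there is read off
from `{l | w l < v_i - β}`, again a lower set determined by its cardinality; on the other points
the function is `0`. Hence a sign pattern is determined by `n` numbers in `{0, …, m}`, so that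
`2 ^ m ≤ (m + 1) ^ n` (`two_pow_le_of_pseudoShatters`), and `m = O(n log n)` follows by taking
logarithms (`le_of_two_pow_le`).
-/

open MeasureTheory Set Real
open scoped Classical ENNReal

noncomputable section

/-- A family of points is pseudo-shattered by a class of real-valued functions if there are
witnesses such that every sign pattern is realized by some function in the class. -/
def PseudoShatters {X : Type*} {m : ℕ} (𝓗 : Set (X → ℝ)) (pts : Fin m → X) : Prop :=
  ∃ w : Fin m → ℝ, ∀ σ : Fin m → Bool, ∃ h ∈ 𝓗, ∀ j,
    if σ j then w j < h (pts j) else h (pts j) < w j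

/-- The class `𝓗_i` of functions mapping opponents' values to bidder `i`'s ex post utility,
over all values `v_i ∈ T_i` and all profiles of monotone bidding strategies with bids
in `[0,H]`. -/
def utilClass (n : ℕ) (H : ℝ) (T : Fin n → Set ℝ) (i : Fin n) : Set ((Fin n → ℝ) → ℝ) :=
  {h | ∃ vi ∈ T i, ∃ b : Fin n → ℝ → ℝ,
    (∀ j, MonotoneOn (b j) (T j)) ∧ (∀ j, ∀ v ∈ T j, b j v ∈ Icc 0 H) ∧
    h = fun v => fpaPost i vi (b i vi) (fun j => b j (v j))}

/-- Two lower sets of a total preorder (here the one pulled back along `f`) are nested, hence equal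
as soon as they have the same cardinality. -/
lemma lowerFor_eq_of_card_eq {m : ℕ} (f : Fin m → ℝ) (A B : Finset (Fin m))
    (hA : ∀ l l', f l ≤ f l' → l' ∈ A → l ∈ A) (hB : ∀ l l', f l ≤ f l' → l' ∈ B → l ∈ B)
    (hc : A.card = B.card) : A = B := by
  have hAB : A ⊆ B ∨ B ⊆ A := by
    by_contra! h
    obtain ⟨a, ha, ha'⟩ := Finset.not_subset.1 h.1
    obtain ⟨b, hb, hb'⟩ := Finset.not_subset.1 h.2
    rcases le_total (f a) (f b) with hab | hab
    · exact ha' (hB _ _ hab hb)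
    · exact hb' (hA _ _ hab ha)
  rcases hAB with h | h
  · exact Finset.eq_of_subset_of_card_le h hc.ge
  · exact (Finset.eq_of_subset_of_card_le h hc.le).symm

/-- Each sign pattern is encoded by `n` cardinalities of lower sets: coordinate `j ≠ i` records
the points where bidder `j` bids below bidder `i`, and coordinate `i` records the points whose
witness is below the payoff from winning. -/
lemma two_pow_le_of_pseudoShatters {n m : ℕ} {H : ℝ} {T : Fin n → Set ℝ} {i : Fin n}
    {pts : Fin m → Fin n → ℝ} (hpts : ∀ l : Fin m, ∀ j : Fin n, j ≠ i → pts l j ∈ T j)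
    (hs : PseudoShatters (utilClass n H T i) pts) : 2 ^ m ≤ (m + 1) ^ n := by
  obtain ⟨w, hw⟩ := hs
  have key : ∀ σ : Fin m → Bool, ∃ A : Fin n → Finset (Fin m),
      (∀ j l l', (if j = i then w l else pts l j) ≤ (if j = i then w l' else pts l' j) →
        l' ∈ A j → l ∈ A j) ∧
      ∀ l, σ l = true ↔ if ∀ j, j ≠ i → l ∈ A j then l ∈ A i else w l < 0 := by
    intro σ
    obtain ⟨h, ⟨vi, -, b, hmono, -, rfl⟩, hσ⟩ := hw σ
    refine ⟨fun j => Finset.univ.filter fun l =>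
      if j = i then w l < vi - b i vi else b j (pts l j) < b i vi, ?_, ?_⟩
    · intro j l l' hle hl'
      by_cases hj : j = i
      · simp only [hj, if_true, Finset.mem_filter, Finset.mem_univ, true_and] at hle hl' ⊢
        exact hle.trans_lt hl'
      · simp only [hj, if_false, Finset.mem_filter, Finset.mem_univ, true_and] at hle hl' ⊢
        exact (hmono j (hpts l j hj) (hpts l' j hj) hle).trans_lt hl'
    · intro l
      have hl : σ l = true ↔ w l < fpaPost i vi (b i vi) (fun j => b j (pts l j)) := by
        have := hσ l
        cases hb : σ l <;> simp only [hb, if_true, Bool.false_eq_true, if_false] at this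
        · simpa using this.le
        · simpa using this
      have hwin : (∀ j, j ≠ i → l ∈ Finset.univ.filter fun l =>
          if j = i then w l < vi - b i vi else b j (pts l j) < b i vi) ↔
          ∀ j, j ≠ i → b j (pts l j) < b i vi := by
        refine forall_congr' fun j => forall_congr' fun hj => ?_
        simp [hj]
      rw [hl]
      by_cases hc : ∀ j, j ≠ i → b j (pts l j) < b i vi
      · rw [if_pos (hwin.2 hc), fpaPost, if_pos hc]
        simp
      · rw [if_neg (fun h => hc (hwin.1 h)), fpaPost, if_neg hc]
  choose A hlow hA using key
  let F : (Fin m → Bool) → Fin n → Fin (m + 1) := fun σ j =>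
    ⟨(A σ j).card, Nat.lt_succ_of_le (by simpa using (A σ j).card_le_univ)⟩
  have hF : Function.Injective F := by
    intro σ τ h
    have hAA : A σ = A τ := funext fun j =>
      lowerFor_eq_of_card_eq _ _ _ (hlow σ j) (hlow τ j) (congrArg Fin.val (congrFun h j))
    funext l
    rw [Bool.eq_iff_iff, hA σ l, hA τ l, hAA]
  simpa using Fintype.card_le_of_injective F hF

lemma le_of_two_pow_le {n m : ℕ} (hn : 2 ≤ n) (h : 2 ^ m ≤ (m + 1) ^ n) :
    (m : ℝ) ≤ 7 * n * Real.log n := by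
  have hn' : (2 : ℝ) ≤ n := by exact_mod_cast hn
  have hlog : (m : ℝ) * Real.log 2 ≤ n * Real.log (m + 1) := by
    have h' : (2 : ℝ) ^ m ≤ ((m : ℝ) + 1) ^ n := by exact_mod_cast h
    simpa [Real.log_pow] using Real.log_le_log (by positivity) h'
  -- The tangent line of `log` at `4 * n` has slope small enough for the `m` term to be absorbed.
  have htan : Real.log (m + 1) ≤ 2 * Real.log 2 + Real.log n + ((m + 1) / (4 * n) - 1) := by
    have h1 := Real.log_le_sub_one_of_pos (x := ((m : ℝ) + 1) / (4 * n)) (by positivity)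
    rw [Real.log_div (by positivity) (by positivity), Real.log_mul (by norm_num) (by positivity),
      show (4 : ℝ) = 2 ^ 2 by norm_num, Real.log_pow] at h1
    norm_num at h1 ⊢
    linarith
  have hmul := mul_le_mul_of_nonneg_left htan (by positivity : (0 : ℝ) ≤ n)
  have hexp : (n : ℝ) * (2 * Real.log 2 + Real.log n + ((m + 1) / (4 * n) - 1)) =
      2 * (n * Real.log 2) + n * Real.log n + (m + 1) / 4 - n := by
    field_simp
    ring
  have hl2 : (n : ℝ) * Real.log 2 ≤ n * Real.log n := by gcongr
  have hlo : (m : ℝ) * 0.69 ≤ m * Real.log 2 := by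
    gcongr
    linarith [Real.log_two_gt_d9]
  linarith

/-- The pseudo-dimension of the class `𝓗_i` of ex post utility functions for monotone
bidding strategies in the first price auction with no-allocation tie-breaking is
at most `C · n · log n`. -/
theorem pdim_utilClass_le :
    ∃ C : ℝ, 0 < C ∧
      ∀ (n : ℕ), 2 ≤ n → ∀ (H : ℝ), 0 < H →
      ∀ (T : Fin n → Set ℝ), (∀ j, T j ⊆ Icc 0 H) →
      ∀ i : Fin n, ∀ m : ℕ, ∀ pts : Fin m → Fin n → ℝ,
        (∀ l : Fin m, ∀ j : Fin n, j ≠ i → pts l j ∈ T j) →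
        PseudoShatters (utilClass n H T i) pts →
        (m : ℝ) ≤ C * n * Real.log n := by
  exact ⟨7, by norm_num, fun n hn _ _ _ _ _ _ _ hpts hs =>
    le_of_two_pow_le hn (two_pow_le_of_pseudoShatters hpts hs)⟩

end
end

section
/- There is a universal constant C > 0 such that for all ε ∈ (0,H) and δ ∈ (0,1): if m/2 ≥ C·(H²/ε²)·[log(H/ε) + log(n/δ)], then with probability at least 1−δ over the draw of S^A (m/2 i.i.d. samples from the product distribution F = ∏_i F_i on [0,H]^n), for every i ∈ [n], |c_i − ĉ_i| ≤ ε, where r̂_i ∈ [−H,H] is the unique solution of E_{v∼F̂_i^A}[max(v − r̂_i, 0)] = c_i and ĉ_i = E_{v∼F_i}[max(v − r̂_i, 0)]. -/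
/-!
Since `r̂ᵢ` solves the empirical equation, `cᵢ - ĉᵢ` is the deviation `D(r̂ᵢ)`, where `D(r)` is the
empirical minus the true mean of `max (v - r) 0`. So it suffices that `|D(r)| ≤ ε` uniformly over
`r ∈ [-H, H]`.

The function `D` is `1`-Lipschitz (`abs_dev_sub_le`), constant on `[-H, 0]` (`dev_of_nonpos`), and
vanishes at `H` (`dev_right`). Hence controlling `D` on a finite net in `[0, H]` is enough, and on
the net Hoeffding's inequality (`hoeffding_dev`) and a union bound (`union_dev`) apply.

Write `L = log (H / ε) + log (n / δ)`. If `L ≥ 1/20`, a net of mesh `ε / 2` has at most `3 H / ε`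
points, and the union bound gives failure probability at most `6 δ exp (-49 L) ≤ δ`. If `L < 1/20`,
the prefactor `6` cannot be absorbed, but then `n = 1`, `ε > 0.95 H`, `δ > 0.95`; here the single
net point `0` suffices, because interpolating between `0` and the zero of `D` at `H` yields
`2 |D(r)| ≤ |D(0)| + H`.
-/

open MeasureTheory Set Real
open scoped Classical ENNReal

noncomputable section

/-- The deviation between the empirical mean over the sample `x` and the mean under `μ` of the
function `v ↦ max (v - r) 0`. -/
def dev {m : ℕ} (μ : Measure ℝ) (x : Fin m → ℝ) (r : ℝ) : ℝ :=
  (m : ℝ)⁻¹ * ∑ k, max (x k - r) 0 - ∫ v, max (v - r) 0 ∂μ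

lemma ae_mem_of_measure_Icc {H : ℝ} {μ : Measure ℝ} [IsProbabilityMeasure μ]
    (hμ : μ (Icc (0:ℝ) H) = 1) : ∀ᵐ v ∂μ, v ∈ Icc (0:ℝ) H :=
  (prob_compl_eq_zero_iff measurableSet_Icc).2 hμ

lemma integrable_gain {H : ℝ} {μ : Measure ℝ} [IsProbabilityMeasure μ]
    (hμ : μ (Icc (0:ℝ) H) = 1) (r : ℝ) : Integrable (fun v => max (v - r) 0) μ := by
  refine Integrable.of_mem_Icc 0 (max (H - r) 0) (by fun_prop) ?_
  filter_upwards [ae_mem_of_measure_Icc hμ] with v hv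
  exact ⟨le_max_right _ _, max_le_max (by linarith [hv.2]) le_rfl⟩

lemma gain_sub_mem {r r' : ℝ} (h : r ≤ r') (v : ℝ) :
    0 ≤ max (v - r) 0 - max (v - r') 0 ∧ max (v - r) 0 - max (v - r') 0 ≤ r' - r := by
  constructor
  · have : max (v - r') 0 ≤ max (v - r) 0 := max_le_max (by linarith) le_rfl
    linarith
  · have : max (v - r) 0 ≤ max (v - r') 0 + (r' - r) :=
      max_le (by linarith [le_max_left (v - r') 0]) (by linarith [le_max_right (v - r') 0])
    linarith

lemma avg_mem {m : ℕ} (hm : 0 < m) {y : Fin m → ℝ} {a b : ℝ} (h : ∀ k, a ≤ y k ∧ y k ≤ b) :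
    a ≤ (m : ℝ)⁻¹ * ∑ k, y k ∧ (m : ℝ)⁻¹ * ∑ k, y k ≤ b := by
  have hm' : (0:ℝ) < m := by exact_mod_cast hm
  have h1 : ∑ _k : Fin m, a ≤ ∑ k, y k := Finset.sum_le_sum fun k _ => (h k).1
  have h2 : ∑ k, y k ≤ ∑ _k : Fin m, b := Finset.sum_le_sum fun k _ => (h k).2
  simp only [Finset.sum_const, Finset.card_univ, Fintype.card_fin, nsmul_eq_mul] at h1 h2
  rw [inv_mul_eq_div, le_div_iff₀ hm', div_le_iff₀ hm']
  constructor <;> linarith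

/-- The empirical and the true mean of `max (v - r) 0` both decrease at rate between `0` and `1`
in `r`, so their difference is `1`-Lipschitz and not merely `2`-Lipschitz. -/
lemma abs_dev_sub_le {m : ℕ} (hm : 0 < m) {H : ℝ} {μ : Measure ℝ} [IsProbabilityMeasure μ]
    (hμ : μ (Icc (0:ℝ) H) = 1) (x : Fin m → ℝ) {r r' : ℝ} (h : r ≤ r') :
    |dev μ x r - dev μ x r'| ≤ r' - r := by
  have h1 := avg_mem hm fun k => gain_sub_mem h (x k)
  have hi := (integrable_gain hμ r).sub (integrable_gain hμ r')
  have h2 : 0 ≤ ∫ v, (max (v - r) 0 - max (v - r') 0) ∂μ :=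
    integral_nonneg fun v => (gain_sub_mem h v).1
  have h3 : ∫ v, (max (v - r) 0 - max (v - r') 0) ∂μ ≤ ∫ _v, (r' - r) ∂μ :=
    integral_mono hi (integrable_const _) fun v => (gain_sub_mem h v).2
  rw [integral_sub (integrable_gain hμ r) (integrable_gain hμ r')] at h2 h3
  rw [Finset.sum_sub_distrib, mul_sub] at h1
  simp only [integral_const, probReal_univ, one_smul] at h3
  unfold dev
  rw [abs_le]
  constructor <;> linarith [h1.1, h1.2]

lemma dev_of_nonpos {m : ℕ} (hm : 0 < m) {H : ℝ} {μ : Measure ℝ} [IsProbabilityMeasure μ]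
    (hμ : μ (Icc (0:ℝ) H) = 1) {x : Fin m → ℝ} (hx : ∀ k, x k ∈ Icc 0 H) {r : ℝ} (hr : r ≤ 0) :
    dev μ x r = dev μ x 0 := by
  have hm' : (m : ℝ) ≠ 0 := by exact_mod_cast hm.ne'
  have key : ∀ v : ℝ, v ∈ Icc 0 H → max (v - r) 0 = max (v - 0) 0 - r := fun v hv => by
    rw [max_eq_left (by linarith [hv.1]), max_eq_left (by linarith [hv.1])]; ring
  have h1 : ∫ v, max (v - r) 0 ∂μ = ∫ v, max (v - 0) 0 ∂μ - r := by
    have : ∫ v, max (v - r) 0 ∂μ = ∫ v, (max (v - 0) 0 - r) ∂μ :=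
      integral_congr_ae ((ae_mem_of_measure_Icc hμ).mono key)
    rw [this, integral_sub (integrable_gain hμ 0) (integrable_const _)]
    simp
  have h2 : ∑ k, max (x k - r) 0 = ∑ k, max (x k - 0) 0 - m * r := by
    rw [Finset.sum_congr rfl fun k _ => key _ (hx k), Finset.sum_sub_distrib]
    simp
  unfold dev
  rw [h1, h2]
  field_simp
  ring

lemma dev_right {m : ℕ} {H : ℝ} {μ : Measure ℝ} [IsProbabilityMeasure μ]
    (hμ : μ (Icc (0:ℝ) H) = 1) {x : Fin m → ℝ} (hx : ∀ k, x k ∈ Icc 0 H) : dev μ x H = 0 := by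
  have key : ∀ v : ℝ, v ∈ Icc 0 H → max (v - H) 0 = 0 := fun v hv =>
    max_eq_right (by linarith [hv.2])
  have h1 : ∫ v, max (v - H) 0 ∂μ = ∫ _v, (0:ℝ) ∂μ :=
    integral_congr_ae ((ae_mem_of_measure_Icc hμ).mono key)
  unfold dev
  rw [h1, Finset.sum_congr rfl fun k _ => key _ (hx k)]
  simp

/-- One-sided Hoeffding bound for the mean of `f` over the `i`-th coordinates of the sample. -/
lemma hoeffding_one_sided {n m : ℕ} (hm : 0 < m) {H : ℝ} (hH : 0 < H) (F : Fin n → Measure ℝ)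
    [∀ i, IsProbabilityMeasure (F i)] (i : Fin n) {f : ℝ → ℝ} (hf : Measurable f) {a b : ℝ}
    (hab : b - a = H) (hfm : ∀ᵐ v ∂(F i), f v ∈ Icc a b) {t : ℝ} (ht : 0 ≤ t) :
    (Measure.pi fun _ : Fin m => Measure.pi F).real
      {S | t ≤ (m : ℝ)⁻¹ * ∑ k, f (S k i) - ∫ v, f v ∂(F i)} ≤
      exp (-(2 * m * t ^ 2 / H ^ 2)) := by
  have hm' : (0:ℝ) < m := by exact_mod_cast hm
  have hsub := ProbabilityTheory.hasSubgaussianMGF_of_mem_Icc hf.aemeasurable hfm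
  set E := ∫ v, f v ∂(F i)
  have hmp : ∀ k : Fin m, MeasurePreserving (fun S : Fin m → Fin n → ℝ => S k i)
      (Measure.pi fun _ : Fin m => Measure.pi F) (F i) := fun k =>
    (measurePreserving_eval F i).comp
      (measurePreserving_eval (fun _ : Fin m => Measure.pi F) k)
  have hind : ProbabilityTheory.iIndepFun (fun (k : Fin m) (S : Fin m → Fin n → ℝ) => f (S k i) - E)
      (Measure.pi fun _ : Fin m => Measure.pi F) :=
    ProbabilityTheory.iIndepFun_pi (X := fun (_ : Fin m) (y : Fin n → ℝ) => f (y i) - E)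
      fun k => ((hf.comp (measurable_pi_apply i)).sub_const E).aemeasurable
  have hs : ∀ k ∈ (Finset.univ : Finset (Fin m)), ProbabilityTheory.HasSubgaussianMGF
      (fun S : Fin m → Fin n → ℝ => f (S k i) - E) ((‖b - a‖₊ / 2) ^ 2)
      (Measure.pi fun _ : Fin m => Measure.pi F) := fun k _ => by
    rw [← (hmp k).map_eq] at hsub
    exact hsub.of_map (hmp k).measurable.aemeasurable
  have h := ProbabilityTheory.HasSubgaussianMGF.measure_sum_ge_le_of_iIndepFun hind hs
    (mul_nonneg hm'.le ht)
  have hset : {S : Fin m → Fin n → ℝ | t ≤ (m : ℝ)⁻¹ * ∑ k, f (S k i) - E} =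
      {S | m * t ≤ ∑ k, (f (S k i) - E)} := by
    ext S
    simp only [mem_ofPred_eq, Finset.sum_sub_distrib, Finset.sum_const, Finset.card_univ,
      Fintype.card_fin, nsmul_eq_mul]
    rw [le_sub_iff_add_le, inv_mul_eq_div, le_div_iff₀ hm', le_sub_iff_add_le]
    ring_nf
  rw [hset]
  refine h.trans (le_of_eq ?_)
  congr 1
  simp only [Finset.sum_const, Finset.card_univ, Fintype.card_fin, nsmul_eq_mul, hab]
  push_cast
  rw [Real.norm_of_nonneg hH.le]
  field_simp

lemma hoeffding_dev {n m : ℕ} (hm : 0 < m) {H : ℝ} (hH : 0 < H) (F : Fin n → Measure ℝ)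
    [∀ i, IsProbabilityMeasure (F i)] (hF : ∀ i, F i (Icc (0:ℝ) H) = 1) (i : Fin n) {r : ℝ}
    (hr : r ∈ Icc 0 H) {t : ℝ} (ht : 0 ≤ t) :
    (Measure.pi fun _ : Fin m => Measure.pi F).real
      {S | t ≤ |dev (F i) (fun k => S k i) r|} ≤
      2 * exp (-(2 * m * t ^ 2 / H ^ 2)) := by
  have hmem : ∀ᵐ v ∂(F i), max (v - r) 0 ∈ Icc 0 H := by
    filter_upwards [ae_mem_of_measure_Icc (hF i)] with v hv
    exact ⟨le_max_right _ _, max_le (by linarith [hv.2, hr.1]) hH.le⟩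
  have h1 := hoeffding_one_sided hm hH F i (f := fun v => max (v - r) 0) (by fun_prop)
    (sub_zero H) hmem ht
  have h2 := hoeffding_one_sided hm hH F i (f := fun v => -max (v - r) 0) (by fun_prop)
    (a := -H) (b := 0) (by ring)
    (hmem.mono fun v hv => ⟨neg_le_neg hv.2, by linarith [hv.1]⟩) ht
  rw [two_mul]
  refine le_trans ?_ ((measureReal_union_le _ _).trans (add_le_add h1 h2))
  refine measureReal_mono fun S hS => ?_
  simp only [mem_union, mem_ofPred_eq, dev, le_abs, integral_neg, Finset.sum_neg_distrib] at hS ⊢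
  refine hS.imp_right fun h => ?_
  linarith

lemma union_dev {n m : ℕ} (hm : 0 < m) {H : ℝ} (hH : 0 < H) (F : Fin n → Measure ℝ)
    [∀ i, IsProbabilityMeasure (F i)] (hF : ∀ i, F i (Icc (0:ℝ) H) = 1) (T : Finset ℝ)
    (hT : ∀ r ∈ T, r ∈ Icc 0 H) {t : ℝ} (ht : 0 ≤ t) :
    (Measure.pi fun _ : Fin m => Measure.pi F).real
      (⋃ p ∈ (Finset.univ : Finset (Fin n)) ×ˢ T, {S | t ≤ |dev (F p.1) (fun k => S k p.1) p.2|}) ≤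
      n * T.card * (2 * exp (-(2 * m * t ^ 2 / H ^ 2))) := by
  refine (measureReal_biUnion_finset_le _ _).trans ?_
  refine (Finset.sum_le_sum fun p hp => hoeffding_dev hm hH F hF p.1
    (hT _ (Finset.mem_product.1 hp).2) ht).trans ?_
  simp

/-- If control of the deviation by `t` on the net `T` forces control by `ε` on `[-H, H]`, and the
union bound over `T` is at most `δ`, then the costs are `ε`-close with probability `1 - δ`. The
event itself need not be measurable, so it is bounded below through its complement. -/
lemma close_of_net {n m : ℕ} (hm : 0 < m) {H : ℝ} (hH : 0 < H) (F : Fin n → Measure ℝ)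
    [∀ i, IsProbabilityMeasure (F i)] (hF : ∀ i, F i (Icc (0:ℝ) H) = 1) (c : Fin n → ℝ)
    {ε δ : ℝ} (T : Finset ℝ) (hT : ∀ r ∈ T, r ∈ Icc 0 H) {t : ℝ} (ht : 0 ≤ t)
    (hnet : ∀ (i : Fin n) (x : Fin m → ℝ), (∀ k, x k ∈ Icc 0 H) →
      (∀ r ∈ T, |dev (F i) x r| < t) → ∀ r ∈ Icc (-H) H, |dev (F i) x r| ≤ ε)
    (hδ : n * T.card * (2 * exp (-(2 * m * t ^ 2 / H ^ 2))) ≤ δ) :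
    (Measure.pi fun _ : Fin m => Measure.pi F)
        {S | ∀ rhat : Fin n → ℝ,
          (∀ i, rhat i ∈ Icc (-H) H ∧
            (m : ℝ)⁻¹ * ∑ j : Fin m, max (S j i - rhat i) 0 = c i) →
          ∀ i, |c i - ∫ v, max (v - rhat i) 0 ∂(F i)| ≤ ε}
        ≥ ENNReal.ofReal (1 - δ) := by
  set P := Measure.pi fun _ : Fin m => Measure.pi F with hP
  set A := {S : Fin m → Fin n → ℝ | ∀ rhat : Fin n → ℝ,
          (∀ i, rhat i ∈ Icc (-H) H ∧
            (m : ℝ)⁻¹ * ∑ j : Fin m, max (S j i - rhat i) 0 = c i) →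
          ∀ i, |c i - ∫ v, max (v - rhat i) 0 ∂(F i)| ≤ ε} with hA
  set B : Set (Fin m → Fin n → ℝ) :=
    ⋃ p ∈ (Finset.univ : Finset (Fin n)) ×ˢ T, {S | t ≤ |dev (F p.1) (fun k => S k p.1) p.2|}
  have hB : P.real B ≤ δ := (union_dev hm hH F hF T hT ht).trans hδ
  have hae : ∀ᵐ S ∂P, ∀ k i, S k i ∈ Icc 0 H := by
    rw [ae_all_iff]; intro k
    rw [ae_all_iff]; intro i
    exact ((measurePreserving_eval F i).comp (measurePreserving_eval
      (fun _ : Fin m => Measure.pi F) k)).quasiMeasurePreserving.ae (ae_mem_of_measure_Icc (hF i))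
  have hsub : ∀ᵐ S ∂P, S ∈ Aᶜ → S ∈ B := by
    filter_upwards [hae] with S hS hSA
    by_contra hSB
    refine hSA fun rhat hr i => ?_
    simp only [B, mem_iUnion, not_exists, Finset.mem_product, Finset.mem_univ, true_and,
      mem_ofPred_eq, not_le] at hSB
    have := hnet i (fun k => S k i) (fun k => hS k i) (fun r hrT => hSB (i, r) hrT)
      (rhat i) (hr i).1
    unfold dev at this
    rwa [(hr i).2] at this
  have hAc : P.real Aᶜ ≤ δ :=
    (ENNReal.toReal_mono (measure_ne_top _ _) (measure_mono_ae hsub)).trans hB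
  have h1 : (1:ℝ) ≤ P.real A + P.real Aᶜ := by
    have := measureReal_union_le (μ := P) A Aᶜ
    rwa [union_compl_self, probReal_univ] at this
  exact ENNReal.ofReal_le_of_le_toReal (by
    change 1 - δ ≤ P.real A
    linarith)

/-- With `m/2 ≥ C (H²/ε²)[log(H/ε) + log(n/δ)]` samples, with probability at least `1-δ`,
the costs `ĉ_i = E_{v∼F_i}[max(v - r̂_i, 0)]` induced by the empirical indices `r̂_i`
(the solutions of `E_{v∼F̂_i^A}[max(v - r̂_i, 0)] = c_i`) are within `ε` of the true
search costs `c_i`. -/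
theorem empirical_costs_close :
    ∃ C : ℝ, 0 < C ∧
      ∀ (n : ℕ), 1 ≤ n → ∀ (H : ℝ), 0 < H →
      ∀ (F : Fin n → Measure ℝ), (∀ i, IsProbabilityMeasure (F i)) →
        (∀ i, F i (Icc (0:ℝ) H) = 1) →
      ∀ c : Fin n → ℝ, (∀ i, c i ∈ Ioc (0:ℝ) H) →
      ∀ ε δ : ℝ, ε ∈ Ioo 0 H → δ ∈ Ioo (0:ℝ) 1 →
      ∀ mA : ℕ, C * (H ^ 2 / ε ^ 2) * (Real.log (H / ε) + Real.log (n / δ)) ≤ mA →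
      (Measure.pi fun _ : Fin mA => Measure.pi F)
        {S | ∀ rhat : Fin n → ℝ,
          (∀ i, rhat i ∈ Icc (-H) H ∧
            (mA : ℝ)⁻¹ * ∑ j : Fin mA, max (S j i - rhat i) 0 = c i) →
          ∀ i, |c i - ∫ v, max (v - rhat i) 0 ∂(F i)| ≤ ε}
        ≥ ENNReal.ofReal (1 - δ) := by
  refine ⟨100, by norm_num, ?_⟩
  intro n hn H hH F hP hF c _ ε δ ⟨hε, hεH⟩ ⟨hδ, hδ1⟩ m hmL
  have hn' : (1:ℝ) ≤ n := by exact_mod_cast hn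
  have hHε : 1 < H / ε := (one_lt_div hε).2 hεH
  have hnδ : 1 < n / δ := (one_lt_div hδ).2 (by linarith)
  set L := Real.log (H / ε) + Real.log (n / δ) with hL
  have hLpos : 0 < L := add_pos (Real.log_pos hHε) (Real.log_pos hnδ)
  have hexpL : exp L = H / ε * (n / δ) := by
    rw [hL, Real.exp_add, Real.exp_log (by linarith), Real.exp_log (by linarith)]
  have hmpos : (0:ℝ) < m := lt_of_lt_of_le (by positivity) hmL
  have hm : 0 < m := by exact_mod_cast hmpos
  have hm1 : (1:ℝ) ≤ m := by exact_mod_cast hm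
  rcases le_or_gt (1 / 20) L with hbig | hsmall
  · -- The net consists of the multiples of `ε / 2` in `[0, H]`.
    set N := ⌊2 * H / ε⌋₊ + 1 with hN
    have hNle : (N : ℝ) ≤ 3 * (H / ε) := by
      have := Nat.floor_le (show 0 ≤ 2 * H / ε by positivity)
      rw [hN]; push_cast
      have e : 2 * H / ε = 2 * (H / ε) := by ring
      linarith
    set T := (Finset.range N).image fun j : ℕ => (j : ℝ) * (ε / 2) with hTdef
    have hcard : (T.card : ℝ) ≤ 3 * (H / ε) := by
      refine le_trans ?_ hNle
      exact_mod_cast Finset.card_image_le.trans (Finset.card_range N).le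
    refine close_of_net hm hH F hF c T ?_ (t := ε / 2) (by positivity) ?_ ?_
    · intro r hr
      obtain ⟨j, hj, rfl⟩ := Finset.mem_image.1 hr
      refine ⟨by positivity, ?_⟩
      have hj' : j ≤ ⌊2 * H / ε⌋₊ := Nat.lt_succ_iff.1 (Finset.mem_range.1 hj)
      have hj2 : (j : ℝ) ≤ 2 * H / ε := (Nat.le_floor_iff (by positivity)).1 hj'
      rw [le_div_iff₀ hε] at hj2
      linarith
    · intro i x hx hnet r hr
      have h0 : (0:ℝ) ∈ T := Finset.mem_image.2 ⟨0, by simp [hN], by simp⟩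
      rcases le_total r 0 with hr0 | hr0
      · rw [dev_of_nonpos hm (hF i) hx hr0]
        linarith [hnet 0 h0]
      · -- Compare with the largest net point below `r`.
        set j := ⌊r / (ε / 2)⌋₊
        have hj1 : (j : ℝ) * (ε / 2) ≤ r :=
          (le_div_iff₀ (by positivity)).1 (Nat.floor_le (by positivity))
        have hj2 : r < (j + 1) * (ε / 2) :=
          (div_lt_iff₀ (by positivity)).1 (Nat.lt_floor_add_one _)
        have hjT : (j : ℝ) * (ε / 2) ∈ T := by
          refine Finset.mem_image.2 ⟨j, Finset.mem_range.2 (Nat.lt_succ_of_le ?_), rfl⟩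
          refine Nat.floor_mono ?_
          rw [div_div_eq_mul_div, mul_comm]
          gcongr
          exact hr.2
        have h1 := abs_lt.1 (hnet _ hjT)
        have h2 := abs_le.1 (abs_dev_sub_le hm (hF i) x hj1)
        rw [abs_le]
        constructor <;> linarith [h1.1, h1.2, h2.1, h2.2]
    · have hexp : exp (-(2 * m * (ε / 2) ^ 2 / H ^ 2)) ≤ exp (-(50 * L)) := by
        rw [Real.exp_le_exp, neg_le_neg_iff]
        have e : 50 * L = 100 * (H ^ 2 / ε ^ 2) * L * (ε ^ 2 / (2 * H ^ 2)) := by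
          field_simp
          norm_num
        have e2 : 2 * m * (ε / 2) ^ 2 / H ^ 2 = m * (ε ^ 2 / (2 * H ^ 2)) := by
          field_simp
        rw [e, e2]
        gcongr
      have h6 : 6 * exp (-(49 * L)) ≤ 1 := by
        have h2 : (6:ℝ) ≤ exp 2 := by
          have := Real.exp_one_gt_d9
          rw [show (2:ℝ) = 1 + 1 by norm_num, Real.exp_add]
          nlinarith
        have h3 : exp 2 ≤ exp (49 * L) := Real.exp_le_exp.2 (by linarith)
        rw [Real.exp_neg, ← div_eq_mul_inv, div_le_one (Real.exp_pos _)]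
        linarith
      calc (n : ℝ) * T.card * (2 * exp (-(2 * m * (ε / 2) ^ 2 / H ^ 2)))
          ≤ n * (3 * (H / ε)) * (2 * exp (-(50 * L))) := by gcongr
        _ = δ * (6 * (exp L * exp (-(50 * L)))) := by
          rw [hexpL]
          field_simp
          norm_num
        _ = δ * (6 * exp (-(49 * L))) := by rw [← Real.exp_add]; ring_nf
        _ ≤ δ := mul_le_of_le_one_right hδ.le h6
  · -- Both factors of `exp L` exceed `1`, so each is at most `1 / 0.95`.
    have hprod : H / ε * (n / δ) * 0.95 < 1 := by
      have h1 : (0.95 : ℝ) ≤ exp (-(1 / 20)) := by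
        have := Real.add_one_le_exp (-(1 / 20 : ℝ))
        norm_num at this ⊢
        linarith
      rw [← hexpL]
      calc exp L * 0.95 ≤ exp L * exp (-(1 / 20)) := by gcongr
        _ = exp (L - 1 / 20) := by rw [← Real.exp_add]; ring_nf
        _ < 1 := (Real.exp_lt_exp.2 (by linarith)).trans_eq Real.exp_zero
    have hε' : 0.95 * H < ε := by
      have : H / ε * 0.95 < 1 := by nlinarith
      rw [div_mul_eq_mul_div, div_lt_one hε] at this
      linarith
    have hδ' : 0.95 * n < δ := by
      have : n / δ * 0.95 < 1 := by nlinarith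
      rw [div_mul_eq_mul_div, div_lt_one hδ] at this
      linarith
    have hn1 : n = 1 := by
      have : (n : ℝ) < 2 := by linarith
      have : n < 2 := by exact_mod_cast this
      omega
    refine close_of_net hm hH F hF c {0} ?_ (t := 2 * ε - H) (by linarith) ?_ ?_
    · intro r hr
      rw [Finset.mem_singleton.1 hr]
      exact ⟨le_rfl, hH.le⟩
    · intro i x hx hnet r hr
      have h0 := abs_lt.1 (hnet 0 (Finset.mem_singleton_self 0))
      rw [abs_le]
      rcases le_total r 0 with hr0 | hr0
      · rw [dev_of_nonpos hm (hF i) hx hr0]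
        constructor <;> linarith [h0.1, h0.2]
      · have h1 := abs_le.1 (abs_dev_sub_le hm (hF i) x hr0)
        have h2 := abs_le.1 (abs_dev_sub_le hm (hF i) x hr.2)
        rw [dev_right (hF i) hx] at h2
        constructor <;> linarith [h0.1, h0.2, h1.1, h1.2, h2.1, h2.2]
    · have hexp : exp (-(2 * m * (2 * ε - H) ^ 2 / H ^ 2)) ≤ exp (-1) := by
        rw [Real.exp_le_exp, neg_le_neg_iff, le_div_iff₀ (by positivity)]
        have h1 : (0.9 * H) ^ 2 ≤ (2 * ε - H) ^ 2 := by
          gcongr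
          linarith
        nlinarith [sq_nonneg (2 * ε - H), sq_nonneg H]
      have he : exp (-1) ≤ 0.4 := by
        have := Real.exp_neg_one_lt_d9
        linarith
      subst hn1
      simp only [Finset.card_singleton, Nat.cast_one] at hδ' ⊢
      linarith

end
end

section
/- In the descending auction with search costs DA(F,c), fix a bidder i and let r_i ∈ ℝ satisfy E_{v∼F_i}[max(v − r_i, 0)] = c_i. Let bidder i use a pure strategy σ_i = (t_i, β_i(·)) that claims above r_i (that is, β_i(v) = t_i for all v ≥ r_i), and let the other bidders use arbitrary pure strategies σ_{-i}. Then E_{v∼F}[A_i(σ)·v_i − I_i(σ)·c_i] = E_{v∼F}[A_i(σ)·min(v_i, r_i)]. -/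
/-!
Write `W`, `I` for the winning and inspection indicators, `f = W vᵢ - I cᵢ` and `g = W min(vᵢ, r)`.
A bid equal to the threshold wins exactly when the bidder inspects, so claiming above `r` gives
`W (vᵢ - r)⁺ = I (vᵢ - r)⁺`, whence `f - g = I · ((vᵢ - r)⁺ - cᵢ)` almost surely. The first factor
depends only on the opponents' values, the second only on `vᵢ`, and the second has mean zero by the
choice of `r`; so `f - g` integrates to zero by independence.

The bidding functions are not assumed measurable, so the inspection event `B` (a set of opponents'
values) may fail to be null-measurable, in which case the Bochner integrals can take the junk
value `0`. On `{vᵢ ≥ r}` one has `f = 1_B (vᵢ - cᵢ)` and `g = r 1_B`. If `f` were a.e. measurable,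
almost every section in `vᵢ` would be, which forces `vᵢ = cᵢ` a.s. on `{vᵢ ≥ r}`; the equation
defining `r` then gives `(vᵢ - r)⁺ = cᵢ` a.s., so `f = g` a.s. Similarly `g` is not a.e. measurable
unless `r = 0`, where `g = 0` a.s., or `vᵢ < r` a.s., where again `f = g` a.s. Hence the two
integrals agree in every case (`integral_eq_of_prod`).
-/

open MeasureTheory Set Real ProbabilityTheory
open scoped Classical ENNReal

noncomputable section

/-- A pure strategy in the descending auction with search costs: an inspection threshold
price together with a bidding (purchase price) function. -/
abbrev DAStrat : Type := ℝ × (ℝ → ℝ)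

/-- Bidder `i` wins the item under the pure profile `σ` and values `v`: her bid strictly
exceeds every opponent's bid (no one wins upon a tie for the highest bid). -/
def daWins {n : ℕ} (σ : Fin n → DAStrat) (v : Fin n → ℝ) (i : Fin n) : Prop :=
  ∀ j, j ≠ i → (σ j).2 (v j) < (σ i).2 (v i)

/-- Bidder `i` inspects her value: her inspection threshold strictly exceeds every
opponent's bid. -/
def daInspects {n : ℕ} (σ : Fin n → DAStrat) (v : Fin n → ℝ) (i : Fin n) : Prop :=
  ∀ j, j ≠ i → (σ j).2 (v j) < (σ i).1

/-- Ex post payoff of bidder `i` in the descending auction with search costs `c`. -/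
def daPayoff {n : ℕ} (c : Fin n → ℝ) (σ : Fin n → DAStrat) (v : Fin n → ℝ) (i : Fin n) : ℝ :=
  (if daWins σ v i then v i - (σ i).2 (v i) else 0) -
    (if daInspects σ v i then c i else 0)

/-- Ex ante utility of bidder `i` in `DA(F,c)` under a mixed strategy profile `μ`. -/
def daUtil {n : ℕ} (F : Fin n → Measure ℝ) (c : Fin n → ℝ)
    (μ : Fin n → Measure DAStrat) (i : Fin n) : ℝ :=
  ∫ σ, (∫ v, daPayoff c σ v i ∂(Measure.pi F)) ∂(Measure.pi μ)

/-- Social welfare in `DA(F,c)` under a mixed strategy profile `μ`. -/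
def daSW {n : ℕ} (F : Fin n → Measure ℝ) (c : Fin n → ℝ)
    (μ : Fin n → Measure DAStrat) : ℝ :=
  ∫ σ, (∫ v, ∑ i, ((if daWins σ v i then v i else 0) -
      (if daInspects σ v i then c i else 0)) ∂(Measure.pi F)) ∂(Measure.pi μ)

/-- A pure DA strategy is valid: its threshold lies in `[0,H]` and its bids lie in `[0,H]`
and never exceed the threshold. -/
def daValidPure (H : ℝ) (s : DAStrat) : Prop :=
  s.1 ∈ Icc (0:ℝ) H ∧ ∀ v ∈ Icc (0:ℝ) H, s.2 v ∈ Icc (0:ℝ) H ∧ s.2 v ≤ s.1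

/-- A mixed DA strategy is valid: a probability distribution over valid pure strategies. -/
def daValidMixed (H : ℝ) (μ : Measure DAStrat) : Prop :=
  IsProbabilityMeasure μ ∧ μ {s | daValidPure H s} = 1



/-- A pure DA strategy claims above `r`: it bids the threshold price on every value
`v ∈ [r, H]`. -/
def claimsAbovePure (H r : ℝ) (s : DAStrat) : Prop :=
  ∀ v, r ≤ v → v ≤ H → s.2 v = s.1

/-- No integrability of `f` and `g` is needed separately: both are integrable or neither is. -/
lemma integral_eq_of_integral_sub_eq_zero {α : Type*} [MeasurableSpace α] {μ : Measure α}
    {f g : α → ℝ} (h : Integrable (fun x => f x - g x) μ) (h0 : ∫ x, (f x - g x) ∂μ = 0) :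
    ∫ x, f x ∂μ = ∫ x, g x ∂μ := by
  by_cases hg : Integrable g μ
  · have hf : Integrable f μ := by
      have := h.add hg
      refine this.congr (Filter.Eventually.of_forall fun x => ?_)
      simp
    rw [integral_sub hf hg] at h0
    linarith
  · have hf : ¬ Integrable f μ := fun hf => hg <| by
      have := hf.sub h
      refine this.congr (Filter.Eventually.of_forall fun x => ?_)
      simp
    rw [integral_undef hg, integral_undef hf]

lemma nullMeasurableSet_of_indicator_const {Y : Type*} [MeasurableSpace Y] {ν : Measure Y}
    {B : Set Y} {k : ℝ} (hk : k ≠ 0)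
    (h : AEStronglyMeasurable (fun y => if y ∈ B then k else 0) ν) : NullMeasurableSet B ν := by
  have h1 := h.aemeasurable.nullMeasurable (measurableSet_singleton k)
  convert h1 using 1
  ext y
  by_cases hy : y ∈ B <;> simp [hy, hk.symm]

/-- If the value equals the cost whenever it reaches the index `r`, then the excess `(x - r)⁺` is
a.s. equal to its mean `c`. -/
lemma excess_ae_eq_of_ae_eq_cost {μ : Measure ℝ} [IsProbabilityMeasure μ] {r c : ℝ} (hc : 0 ≤ c)
    (h0 : ∀ᵐ x ∂μ, 0 ≤ x) (hr : ∫ x, max (x - r) 0 ∂μ = c)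
    (h : ∀ᵐ x ∂μ, r ≤ x → x = c) : ∀ᵐ x ∂μ, max (x - r) 0 = c := by
  rcases le_or_gt r 0 with hr0 | hr0
  · have hx : ∀ᵐ x ∂μ, max (x - r) 0 = max (c - r) 0 := by
      filter_upwards [h0, h] with x h1 h2
      rw [h2 (by linarith)]
    have := integral_congr_ae hx
    rw [hr] at this
    simp only [integral_const, probReal_univ, one_smul] at this
    filter_upwards [hx] with x h1
    rw [h1, ← this]
  · have hx : ∀ᵐ x ∂μ, max (x - r) 0 ≤ max (c - r) 0 := by
      filter_upwards [h] with x h2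
      rcases le_or_gt r x with h3 | h3
      · rw [h2 h3]
      · rw [max_eq_right (by linarith : x - r ≤ 0)]
        exact le_max_right _ _
    have hle : c ≤ max (c - r) 0 := by
      have := integral_mono_of_nonneg
        (Filter.Eventually.of_forall fun x : ℝ => le_max_right (x - r) 0)
        (integrable_const (μ := μ) (max (c - r) 0)) hx
      rw [hr] at this
      simpa using this
    -- `c ≤ (c - r)⁺` with `r > 0` leaves only `c = 0`.
    have hc0 : c = 0 := by
      rcases le_max_iff.1 hle with h1 | h1 <;> linarith
    filter_upwards [h] with x h2
    rcases le_or_gt r x with h3 | h3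
    · linarith [h2 h3]
    · rw [hc0, max_eq_right (by linarith)]

/-- The identity on the product of the bidder's value space and the space `Y` of opponents' values;
`B` is the inspection event and `f`, `g` are the two integrands, with no measurability assumed. -/
lemma integral_eq_of_prod {Y : Type*} [MeasurableSpace Y] {μ : Measure ℝ}
    [IsProbabilityMeasure μ] {ν : Measure Y} [IsProbabilityMeasure ν] {B : Set Y}
    {f g : ℝ × Y → ℝ} {r c H : ℝ} (hc : 0 ≤ c) (hsupp : ∀ᵐ x ∂μ, x ∈ Icc (0:ℝ) H)
    (hr : ∫ x, max (x - r) 0 ∂μ = c)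
    (hf : ∀ x y, r ≤ x → x ∈ Icc (0:ℝ) H → f (x, y) = if y ∈ B then x - c else 0)
    (hg : ∀ x y, r ≤ x → x ∈ Icc (0:ℝ) H → g (x, y) = if y ∈ B then r else 0)
    (hlt : ∀ x y, x < r → f (x, y) - g (x, y) = if y ∈ B then -c else 0) :
    ∫ p, f p ∂(μ.prod ν) = ∫ p, g p ∂(μ.prod ν) := by
  have hsupp' : ∀ᵐ p ∂(μ.prod ν), p.1 ∈ Icc (0:ℝ) H :=
    Measure.quasiMeasurePreserving_fst.ae hsupp
  have hd : ∀ᵐ p ∂(μ.prod ν), f p - g p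
      = (max (p.1 - r) 0 - c) * B.indicator (fun _ => (1:ℝ)) p.2 := by
    filter_upwards [hsupp'] with p hp
    obtain ⟨x, y⟩ := p
    rcases le_or_gt r x with h | h
    · rw [hf x y h hp, hg x y h hp]
      by_cases hy : y ∈ B <;> simp [hy, h]
      ring
    · rw [hlt x y h]
      by_cases hy : y ∈ B <;> simp [hy, h.le]
  by_cases hB : NullMeasurableSet B ν
  · have hint : Integrable (fun x : ℝ => max (x - r) 0) μ := by
      refine Integrable.of_bound (C := |H| + |r|) (by fun_prop) ?_
      filter_upwards [hsupp] with x hx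
      rw [Real.norm_eq_abs, abs_of_nonneg (le_max_right _ _)]
      refine max_le ?_ (by positivity)
      linarith [hx.2, le_abs_self H, neg_abs_le r]
    have hB1 : Integrable (B.indicator (fun _ => (1:ℝ))) ν :=
      (integrable_const (1:ℝ)).indicator₀ hB
    refine integral_eq_of_integral_sub_eq_zero
      (((hint.sub (integrable_const c)).mul_prod hB1).congr ?_) ?_
    · filter_upwards [hd] with p hp
      simp [hp]
    · rw [integral_congr_ae hd, integral_prod_mul (fun x => max (x - r) 0 - c),
        integral_sub hint (integrable_const c), hr]
      simp
  · by_cases hφ : ∀ᵐ x ∂μ, max (x - r) 0 = c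
    · refine integral_congr_ae ?_
      have hφ' : ∀ᵐ p ∂(μ.prod ν), max (p.1 - r) 0 = c :=
        Measure.quasiMeasurePreserving_fst.ae hφ
      filter_upwards [hd, hφ'] with p h1 h2
      rw [h2, sub_self, zero_mul] at h1
      linarith
    · have hf0 : ¬ Integrable f (μ.prod ν) := by
        intro hI
        refine hφ (excess_ae_eq_of_ae_eq_cost hc (hsupp.mono fun x hx => hx.1) hr ?_)
        filter_upwards [hI.aestronglyMeasurable.prodMk_left, hsupp] with x hx hxs hrx
        by_contra hne
        refine hB (nullMeasurableSet_of_indicator_const (sub_ne_zero.2 hne) ?_)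
        simpa only [hf x _ hrx hxs] using hx
      rw [integral_undef hf0]
      by_cases hr0 : r = 0
      · symm
        refine integral_eq_zero_of_ae ?_
        filter_upwards [hsupp'] with p hp
        obtain ⟨x, y⟩ := p
        have := hg x y (hr0.le.trans hp.1) hp
        simpa [hr0] using this
      · have hg0 : ¬ Integrable g (μ.prod ν) := by
          intro hI
          refine hφ (excess_ae_eq_of_ae_eq_cost hc (hsupp.mono fun x hx => hx.1) hr ?_)
          -- A.e. measurability of `g` excludes the event `{x ≥ r}` altogether.
          filter_upwards [hI.aestronglyMeasurable.prodMk_left, hsupp] with x hx hxs hrx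
          refine absurd (nullMeasurableSet_of_indicator_const hr0 ?_) hB
          simpa only [hg x _ hrx hxs] using hx
        rw [integral_undef hg0]

/-- For a bidder `i` whose strategy claims above the index `r` of `(F_i, c_i)`, the expected
allocated value minus inspection cost equals the expected allocated capped value
`min(v_i, r)`. -/
theorem da_claimsAbove_value_eq_capped
    (n : ℕ) (H : ℝ) (hH : 0 < H)
    (F : Fin n → Measure ℝ) (hFprob : ∀ j, IsProbabilityMeasure (F j))
    (hFsupp : ∀ j, F j (Icc (0:ℝ) H) = 1)
    (c : Fin n → ℝ) (hc : ∀ j, c j ∈ Icc (0:ℝ) H)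
    (i : Fin n) (r : ℝ) (hr : ∫ v, max (v - r) 0 ∂(F i) = c i)
    (σ : Fin n → DAStrat) (hvalid : ∀ j, daValidPure H (σ j))
    (hclaims : claimsAbovePure H r (σ i)) :
    (∫ v, ((if daWins σ v i then v i else 0) -
        (if daInspects σ v i then c i else 0)) ∂(Measure.pi F)) =
      ∫ v, (if daWins σ v i then min (v i) r else 0) ∂(Measure.pi F) := by
  obtain _ | m := n
  · exact i.elim0
  -- Separate bidder `i`'s value from her opponents' values.
  have hmp := (measurePreserving_piFinSuccAbove F i).symm
  rw [← hmp.integral_comp', ← hmp.integral_comp']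
  have hsupp : ∀ᵐ x ∂(F i), x ∈ Icc (0:ℝ) H :=
    (mem_ae_iff_prob_eq_one measurableSet_Icc).2 (hFsupp i)
  have he : ∀ (x : ℝ) (y : Fin m → ℝ),
      (MeasurableEquiv.piFinSuccAbove (fun _ => ℝ) i).symm (x, y) = i.insertNth x y :=
    fun x y => rfl
  have hI : ∀ (x : ℝ) (y : Fin m → ℝ), daInspects σ (i.insertNth x y) i ↔
      y ∈ {y : Fin m → ℝ | ∀ k, (σ (i.succAbove k)).2 (y k) < (σ i).1} := by
    intro x y
    simp only [daInspects, mem_ofPred_eq]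
    constructor
    · intro h k
      simpa using h (i.succAbove k) (Fin.succAbove_ne i k)
    · intro h j hj
      obtain ⟨k, rfl⟩ := Fin.exists_succAbove_eq hj
      simpa using h k
  have hW : ∀ (x : ℝ) (y : Fin m → ℝ), r ≤ x → x ∈ Icc (0:ℝ) H →
      (daWins σ (i.insertNth x y) i ↔ daInspects σ (i.insertNth x y) i) := by
    intro x y h hx
    simp only [daWins, daInspects, Fin.insertNth_apply_same, hclaims x h hx.2]
  refine integral_eq_of_prod
    (B := {y : Fin m → ℝ | ∀ k, (σ (i.succAbove k)).2 (y k) < (σ i).1}) (r := r) (hc i).1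
    hsupp hr ?_ ?_ ?_
  · intro x y h hx
    simp only [he, hW x y h hx, hI, Fin.insertNth_apply_same]
    split_ifs <;> simp
  · intro x y h hx
    simp only [he, hW x y h hx, hI, Fin.insertNth_apply_same, min_eq_right h]
    split_ifs <;> rfl
  · intro x y h
    simp only [he, hI, Fin.insertNth_apply_same, min_eq_left h.le]
    split_ifs <;> simp

end
end

section
/- Let Z be a real-valued random variable supported on [1/e, 1] with probability density f_Z(z) = 1/z. Then for every κ ≥ 0 and every p ≥ 0, E[ Z·κ·1{(1−Z)·κ > p} ] ≥ (1 − 1/e)·κ − p. -/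
open Real MeasureTheory Set

/-!
The factor `z` cancels the density `1/z`, so for `κ > 0` the integral is `κ` times the length of
`{z ∈ [1/e, 1] : z < 1 - p/κ} = [1/e, 1 - p/κ)`, namely `κ * max (1 - p/κ - 1/e) 0`. Dropping the
maximum leaves exactly `(1 - 1/e) κ - p`. For `κ = 0` the bound reads `-p ≤ 0`.
-/

/-- For a random variable `Z` on `[1/e, 1]` with density `1/z`, and any `κ, p ≥ 0`,
`E[Z·κ·1{(1−Z)·κ > p}] ≥ (1 − 1/e)·κ − p`.  The expectation is written as the Lebesgue
integral of the integrand times the density `1/z` over `[1/e, 1]`. -/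
theorem smoothness_density_bound (κ p : ℝ) (hκ : 0 ≤ κ) (hp : 0 ≤ p) :
    (1 - (Real.exp 1)⁻¹) * κ - p ≤
      ∫ z in Icc ((Real.exp 1)⁻¹) 1,
        (z * κ * (if p < (1 - z) * κ then 1 else 0)) * z⁻¹ := by
  set a : ℝ := (Real.exp 1)⁻¹ with ha
  have ha0 : 0 < a := by positivity
  rcases hκ.eq_or_lt with rfl | hκ
  · simpa using hp
  -- On `[a, 1]` the factor `z` cancels the density `1/z`, and the event `p < (1 - z) κ` is
  -- `z < 1 - p/κ`, so the integrand is `κ` times the indicator of `z < 1 - p/κ`.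
  have h1 : ∫ z in Icc a 1, (z * κ * (if p < (1 - z) * κ then 1 else 0)) * z⁻¹ =
      ∫ z in Icc a 1, (Iio (1 - p / κ)).indicator (fun _ => κ) z := by
    refine setIntegral_congr_fun measurableSet_Icc fun z hz => ?_
    have hz0 : z ≠ 0 := (ha0.trans_le hz.1).ne'
    have hiff : p < (1 - z) * κ ↔ z ∈ Iio (1 - p / κ) := by
      rw [← div_lt_iff₀ hκ, mem_Iio]
      constructor <;> intro h <;> linarith
    by_cases h : z ∈ Iio (1 - p / κ)
    · simp only [hiff, if_pos h, indicator_of_mem h]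
      field_simp
    · simp only [hiff, if_neg h, indicator_of_notMem h]
      ring
  -- `p ≥ 0` puts the threshold `1 - p/κ` below `1`, so the upper endpoint plays no role.
  have h2 : Icc a 1 ∩ Iio (1 - p / κ) = Ico a (1 - p / κ) := by
    have hle : 0 ≤ p / κ := by positivity
    ext z
    simp only [mem_inter_iff, mem_Icc, mem_Iio, mem_Ico]
    constructor
    · rintro ⟨⟨h, -⟩, h'⟩
      exact ⟨h, h'⟩
    · rintro ⟨h, h'⟩
      exact ⟨⟨h, by linarith⟩, h'⟩
  rw [h1, setIntegral_indicator measurableSet_Iio, h2, setIntegral_const, smul_eq_mul,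
    Measure.real, Real.volume_Ico, ENNReal.toReal_ofReal']
  calc (1 - a) * κ - p = (1 - p / κ - a) * κ := by
        field_simp
        ring
    _ ≤ max (1 - p / κ - a) 0 * κ := by
        gcongr
        exact le_max_left _ _
end
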